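/- arXiv:2310.05328 — 2 statements merged into one kernel-verified Lean document; each statement's English description precedes it below -/
import Mathlib

section
/- For every n ≥ 1, all real numbers y_1, …, y_n, every real r > 0, and every integer 1 ≤ ℓ ≤ n, one has Σ_{m=0}^{ℓ} binom(ℓ,m) · |s_m(y)| · r^(ℓ−m) ≥ (|s_ℓ(y)|^(2/ℓ) + r^2)^(ℓ/2). -/
open Finset Real

/-- The non-normalized elementary symmetric function `S_m(y)`. -/
noncomputable def esymmS (n m : ℕ) (y : Fin n → ℝ) : ℝ :=
  ∑ A ∈ powersetCard m (univ : Finset (Fin n)), ∏ i ∈ A, y i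

/-- The elementary symmetric mean `s_m(y) = S_m(y) / binom(n,m)`. -/
noncomputable def smean (n m : ℕ) (y : Fin n → ℝ) : ℝ :=
  esymmS n m y / (n.choose m)

open Polynomial in
lemma aux_coeff (n m : ℕ) (hm : m ≤ n) (y : Fin n → ℝ) :
    (∏ i, (X + C (y i)) : ℝ[X]).coeff (n - m) = esymmS n m y := by
  rw [Finset.prod_X_add_C_coeff _ _ (by simp)]
  simp only [Finset.card_univ, Fintype.card_fin, esymmS]
  rw [Nat.sub_sub_self hm]

open Polynomial in
lemma aux_natDegree (n : ℕ) (y : Fin n → ℝ) :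
    (∏ i, (X + C (y i)) : ℝ[X]).natDegree = n := by
  rw [natDegree_prod_of_monic _ _ (fun i _ => monic_X_add_C _)]
  simp

open Polynomial in
lemma aux_deriv (p : ℝ[X]) (hp : p.Splits) (k : ℕ) : (derivative^[k] p).Splits := by
  induction k with
  | zero => simpa
  | succ k ih =>
    rw [Function.iterate_succ_apply']
    set q := derivative^[k] p
    by_cases h0 : q.natDegree = 0
    · rw [derivative_of_natDegree_zero h0]; simp
    rw [splits_iff_card_roots] at ih ⊢
    have h1 := card_roots_le_derivative q
    have h2 := card_roots' (derivative q)
    have h3 := natDegree_derivative_lt h0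
    omega

open Polynomial in
lemma aux_reduce (n ℓ : ℕ) (h : ℓ ≤ n) (y : Fin n → ℝ) :
    ∃ z : Fin ℓ → ℝ, ∀ m ≤ ℓ, smean ℓ m z = smean n m y := by
  set P : ℝ[X] := ∏ i, (X + C (y i)) with hP
  set Q := derivative^[n - ℓ] P with hQ
  have hPs : P.Splits := Splits.prod (fun i _ => Splits.X_add_C _)
  have hQs : Q.Splits := aux_deriv P hPs _
  have hc : ∀ m ≤ ℓ, Q.coeff (ℓ - m) = ((n - m).descFactorial (n - ℓ) : ℝ) * esymmS n m y := by
    intro m hm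
    rw [hQ, coeff_iterate_derivative, show ℓ - m + (n - ℓ) = n - m by omega,
      aux_coeff n m (by omega), nsmul_eq_mul]
  have he0 : ∀ (n : ℕ) (y : Fin n → ℝ), esymmS n 0 y = 1 := by
    intro n y; simp [esymmS]
  have hl : Q.coeff ℓ = (n.descFactorial (n - ℓ) : ℝ) := by
    have := hc 0 (by omega)
    simpa [he0] using this
  have hpos : (0 : ℝ) < (n.descFactorial (n - ℓ) : ℝ) := by
    exact_mod_cast Nat.descFactorial_pos.2 (by omega)
  have hdeg : Q.natDegree = ℓ := by
    apply le_antisymm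
    · have := natDegree_iterate_derivative P (n - ℓ)
      rw [aux_natDegree] at this
      rw [hQ]; omega
    · apply le_natDegree_of_ne_zero
      rw [hl]; exact hpos.ne'
  have hcard : Q.roots.toList.length = ℓ := by
    rw [Multiset.length_toList, ← hdeg, hQs.natDegree_eq_card_roots]
  let z : Fin ℓ → ℝ := fun i => - Q.roots.toList.get (i.cast hcard.symm)
  have hQe : Q = C (n.descFactorial (n - ℓ) : ℝ) * ∏ i, (X + C (z i)) := by
    conv_lhs => rw [hQs.eq_prod_roots, leadingCoeff, hdeg, hl]
    congr 1
    have : ∏ i, (X + C (z i)) = ∏ i : Fin Q.roots.toList.length,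
        (X - C (Q.roots.toList.get i)) := by
      apply Fintype.prod_equiv (finCongr hcard.symm)
      intro i
      simp [z, sub_eq_add_neg]
    rw [this, ← List.prod_ofFn]
    conv_lhs => rw [← Multiset.coe_toList Q.roots, Multiset.map_coe, Multiset.prod_coe]
    congr 1
    apply List.ext_get <;> simp
  refine ⟨z, fun m hm => ?_⟩
  have h1 := hc m hm
  rw [hQe, coeff_C_mul, aux_coeff ℓ m hm] at h1
  have hid : (n - m).descFactorial (n - ℓ) * n.choose m
      = n.descFactorial (n - ℓ) * ℓ.choose m := by
    have a1 := Nat.factorial_mul_descFactorial (n := n - m) (k := n - ℓ) (by omega)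
    have a2 := Nat.factorial_mul_descFactorial (n := n) (k := n - ℓ) (by omega)
    have a3 := Nat.choose_mul_factorial_mul_factorial (n := n) (k := m) (by omega)
    have a4 := Nat.choose_mul_factorial_mul_factorial hm
    rw [show n - m - (n - ℓ) = ℓ - m by omega] at a1
    rw [show n - (n - ℓ) = ℓ by omega] at a2
    have p1 := Nat.factorial_pos m
    have p2 := Nat.factorial_pos (ℓ - m)
    apply Nat.eq_of_mul_eq_mul_right (Nat.mul_pos p1 p2)
    calc _ = n.choose m * m.factorial * ((ℓ - m).factorial * (n - m).descFactorial (n - ℓ)) := by ring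
      _ = (ℓ.choose m * m.factorial * (ℓ - m).factorial) * n.descFactorial (n - ℓ) := by
        rw [a1, a3, a4, a2]
      _ = _ := by ring
  have hid' : ((n - m).descFactorial (n - ℓ) : ℝ) * n.choose m
      = n.descFactorial (n - ℓ) * ℓ.choose m := by exact_mod_cast hid
  have c1 : (0 : ℝ) < n.choose m := by exact_mod_cast Nat.choose_pos (by omega)
  have c2 : (0 : ℝ) < ℓ.choose m := by exact_mod_cast Nat.choose_pos hm
  unfold smean
  rw [div_eq_div_iff c2.ne' c1.ne']
  apply mul_left_cancel₀ hpos.ne'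
  linear_combination (n.choose m : ℝ) * h1 + esymmS n m y * hid'

lemma aux_mahler (n : ℕ) (hn : 1 ≤ n) (z : Fin n → ℝ) (r : ℝ) (hr : 0 < r) :
    (|∏ i, z i| ^ ((2 : ℝ) / n) + r ^ 2) ≤ (∏ i, (z i ^ 2 + r ^ 2)) ^ ((1 : ℝ) / n) := by
  have hn' : (0 : ℝ) < n := by exact_mod_cast hn
  have hw : ∑ i : Fin n, (1 : ℝ) / n = 1 := by
    simp; field_simp
  have hp : ∀ i, 0 < z i ^ 2 + r ^ 2 := fun i => by positivity
  have h1 := Real.geom_mean_le_arith_mean_weighted univ (fun _ : Fin n => (1 : ℝ) / n)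
    (fun i => z i ^ 2 / (z i ^ 2 + r ^ 2)) (fun i _ => by positivity) hw
    (fun i _ => by positivity)
  have h2 := Real.geom_mean_le_arith_mean_weighted univ (fun _ : Fin n => (1 : ℝ) / n)
    (fun i => r ^ 2 / (z i ^ 2 + r ^ 2)) (fun i _ => by positivity) hw
    (fun i _ => by positivity)
  have h3 : ∑ i : Fin n, (1 : ℝ) / n * (z i ^ 2 / (z i ^ 2 + r ^ 2)) +
      ∑ i : Fin n, (1 : ℝ) / n * (r ^ 2 / (z i ^ 2 + r ^ 2)) = 1 := by
    rw [← Finset.sum_add_distrib]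
    refine Eq.trans ?_ hw
    refine Finset.sum_congr rfl fun i _ => ?_
    rw [← mul_add, ← add_div, div_self (hp i).ne', mul_one]
  have hP : 0 < ∏ i, (z i ^ 2 + r ^ 2) := Finset.prod_pos fun i _ => hp i
  rw [Real.finsetProd_rpow _ _ (fun i _ => by positivity), Finset.prod_div_distrib,
    Real.div_rpow (Finset.prod_nonneg fun i _ => by positivity) hP.le] at h1 h2
  have e1 : (∏ i, z i ^ 2) ^ ((1 : ℝ) / n) = |∏ i, z i| ^ ((2 : ℝ) / n) := by
    rw [Finset.prod_pow, ← sq_abs, ← Real.rpow_natCast, ← Real.rpow_mul (abs_nonneg _)]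
    congr 1; push_cast; ring
  have e2 : (∏ i : Fin n, r ^ 2) ^ ((1 : ℝ) / n) = r ^ 2 := by
    rw [Finset.prod_const, Finset.card_univ, Fintype.card_fin, one_div]
    exact Real.pow_rpow_inv_natCast (by positivity) (by omega)
  rw [e1] at h1
  rw [e2] at h2
  have hD : 0 < (∏ i, (z i ^ 2 + r ^ 2)) ^ ((1 : ℝ) / n) := Real.rpow_pos_of_pos hP _
  have : (|∏ i, z i| ^ ((2 : ℝ) / n) + r ^ 2) / (∏ i, (z i ^ 2 + r ^ 2)) ^ ((1 : ℝ) / n) ≤ 1 := by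
    rw [add_div]; linarith
  rwa [div_le_one hD] at this

open Polynomial in
lemma aux_norm (n : ℕ) (z : Fin n → ℝ) (r : ℝ) (hr : 0 < r) :
    Real.sqrt (∏ i, (z i ^ 2 + r ^ 2)) ≤
      ∑ m ∈ Finset.range (n + 1), |esymmS n m z| * r ^ (n - m) := by
  set P : ℝ[X] := ∏ i, (X + C (z i)) with hP
  have h1 : aeval (Complex.I * r) P = ∏ i, (Complex.I * r + z i) := by
    rw [hP, map_prod]; simp
  have h2 : ‖aeval (Complex.I * r) P‖ = Real.sqrt (∏ i, (z i ^ 2 + r ^ 2)) := by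
    rw [h1, norm_prod, Real.sqrt_eq_rpow, ← Real.finsetProd_rpow _ _ (fun i _ => by positivity)]
    refine Finset.prod_congr rfl fun i _ => ?_
    rw [← Real.sqrt_eq_rpow, Complex.norm_def, Complex.normSq_apply]
    congr 1
    simp; ring
  rw [← h2, aeval_eq_sum_range, aux_natDegree]
  refine (norm_sum_le _ _).trans ?_
  rw [← Finset.sum_range_reflect]
  refine Finset.sum_le_sum fun m hm => ?_
  have hm' : m ≤ n := by simpa [Nat.lt_succ_iff] using hm
  rw [show n + 1 - 1 - m = n - m by omega, aux_coeff n m hm']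
  simp [norm_smul, abs_of_pos hr]

theorem new_inequality_r2 :
    ∀ (n : ℕ), 1 ≤ n → ∀ (y : Fin n → ℝ) (r : ℝ), 0 < r → ∀ (ℓ : ℕ), 1 ≤ ℓ → ℓ ≤ n →
      ∑ m ∈ Finset.range (ℓ + 1), (ℓ.choose m : ℝ) * |smean n m y| * r ^ (ℓ - m) ≥
        (|smean n ℓ y| ^ ((2 : ℝ) / ℓ) + r ^ 2) ^ ((ℓ : ℝ) / 2) := by
  intro n hn y r hr ℓ hl hln
  obtain ⟨z, hz⟩ := aux_reduce n ℓ hln y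
  have hl' : (ℓ : ℝ) ≠ 0 := by exact_mod_cast (by omega : ℓ ≠ 0)
  have e1 : ∑ m ∈ Finset.range (ℓ + 1), (ℓ.choose m : ℝ) * |smean n m y| * r ^ (ℓ - m) =
      ∑ m ∈ Finset.range (ℓ + 1), |esymmS ℓ m z| * r ^ (ℓ - m) := by
    refine Finset.sum_congr rfl fun m hm => ?_
    have hm' : m ≤ ℓ := by simpa [Nat.lt_succ_iff] using hm
    have c2 : (0 : ℝ) < ℓ.choose m := by exact_mod_cast Nat.choose_pos hm'
    rw [← hz m hm', smean, abs_div, abs_of_pos c2]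
    field_simp
  have e2 : smean n ℓ y = ∏ i, z i := by
    rw [← hz ℓ le_rfl, smean, esymmS]
    have : powersetCard ℓ (univ : Finset (Fin ℓ)) = {univ} := by
      have := Finset.powersetCard_self (univ : Finset (Fin ℓ))
      simpa using this
    rw [this]; simp
  rw [e1, e2, ge_iff_le]
  refine le_trans ?_ (aux_norm ℓ z r hr)
  have h := Real.rpow_le_rpow (by positivity) (aux_mahler ℓ hl z r hr)
    (by positivity : (0 : ℝ) ≤ (ℓ : ℝ) / 2)
  refine h.trans (le_of_eq ?_)
  rw [← Real.rpow_mul (Finset.prod_nonneg fun i _ => by positivity), Real.sqrt_eq_rpow]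
  congr 1
  field_simp
end

section
/- For every n ≥ 2, all real numbers y_1, …, y_n, and every integer 2 ≤ ℓ ≤ n, one has |s_ℓ(y)|^(2/ℓ) ≤ ℓ · s_1(y)^2 − (ℓ−1) · s_2(y). -/
open Finset Real

open Polynomial in
lemma aux_deriv_s11 (n : ℕ) (s : Multiset ℝ) (hs : s.card = n + 1) :
    ∃ t : Multiset ℝ, t.card = n ∧ ∀ k ≤ n,
      t.esymm k / (n.choose k : ℝ) = s.esymm k / ((n + 1).choose k : ℝ) := by
  set p : ℝ[X] := (s.map (fun a => X - C a)).prod with hp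
  have hpm : p.Monic := monic_multiset_prod_of_monic _ _ (fun a _ => monic_X_sub_C a)
  have hpd : p.natDegree = n + 1 := by
    rw [hp, natDegree_multiset_prod_X_sub_C_eq_card, hs]
  have hpr : p.roots = s := by rw [hp, roots_multiset_prod_X_sub_C]
  have h1 := card_roots_le_derivative p
  rw [hpr, hs] at h1
  have hdd : p.derivative.natDegree = n := by
    rw [natDegree_derivative, hpd]; rfl
  have h2 := p.derivative.card_roots'
  have hc : p.derivative.roots.card = n := by omega
  refine ⟨p.derivative.roots, hc, fun k hk => ?_⟩
  have hlead : p.derivative.leadingCoeff = n + 1 := by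
    rw [leadingCoeff, hdd, coeff_derivative]
    have : p.coeff (n + 1) = 1 := by rw [← hpd]; exact hpm
    rw [this]; ring
  have e1 := coeff_eq_esymm_roots_of_card (p := p.derivative) (by rw [hc, hdd])
    (k := n - k) (by omega)
  have e2 := coeff_eq_esymm_roots_of_card (p := p) (by rw [hpr, hs, hpd])
    (k := n - k + 1) (by omega)
  rw [coeff_derivative, e2, hlead, hdd, hpd, hpr, hpm.leadingCoeff] at e1
  have a1 : n - (n - k) = k := by omega
  have a2 : n + 1 - (n - k + 1) = k := by omega
  rw [a1, a2, Nat.cast_sub hk] at e1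
  have h3 : s.esymm k * ((n : ℝ) - k + 1) = (n + 1) * p.derivative.roots.esymm k := by
    have : ((-1 : ℝ) ^ k) ≠ 0 := by positivity
    apply mul_left_cancel₀ this
    linarith
  have h4 : (n.choose k : ℝ) * (n + 1) = (n + 1).choose k * ((n : ℝ) - k + 1) := by
    have := Nat.choose_mul_succ_eq n k
    have h5 : ((n + 1 - k : ℕ) : ℝ) = (n : ℝ) - k + 1 := by
      rw [Nat.cast_sub (by omega)]; push_cast; ring
    rw [← h5]; exact_mod_cast this
  have c1 : (0 : ℝ) < n.choose k := by exact_mod_cast Nat.choose_pos hk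
  have c2 : (0 : ℝ) < (n + 1).choose k := by exact_mod_cast Nat.choose_pos (by omega)
  rw [div_eq_div_iff c1.ne' c2.ne']
  have hn : (n + 1 : ℝ) ≠ 0 := by positivity
  apply mul_left_cancel₀ hn
  linear_combination (-(n + 1).choose k : ℝ) * h3 - s.esymm k * h4

lemma aux_iter (l n : ℕ) (h : l ≤ n) (s : Multiset ℝ) (hs : s.card = n) :
    ∃ t : Multiset ℝ, t.card = l ∧ ∀ k ≤ l,
      t.esymm k / (l.choose k : ℝ) = s.esymm k / (n.choose k : ℝ) := by
  induction n, h using Nat.le_induction generalizing s with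
  | base => exact ⟨s, hs, fun _ _ => rfl⟩
  | succ n h ih =>
    obtain ⟨t, ht, h1⟩ := aux_deriv_s11 n s hs
    obtain ⟨u, hu, h2⟩ := ih t ht
    exact ⟨u, hu, fun k hk => (h2 k hk).trans (h1 k (hk.trans h))⟩

lemma aux_esymm_one (s : Multiset ℝ) : s.esymm 1 = s.sum := by
  simp [Multiset.esymm, Multiset.powersetCard_one]

lemma aux_sq (s : Multiset ℝ) :
    (s.map (fun x => x ^ 2)).sum = s.sum ^ 2 - 2 * s.esymm 2 := by
  induction s using Multiset.induction_on with
  | empty => simp [Multiset.esymm, Multiset.powersetCard_zero_right 1]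
  | cons a s ih =>
    have h : (a ::ₘ s).esymm 2 = s.esymm 2 + a * s.sum := by
      rw [← aux_esymm_one]
      simp [Multiset.esymm, Multiset.powersetCard_cons, Multiset.sum_map_mul_left]
    rw [h, Multiset.map_cons, Multiset.sum_cons, ih, Multiset.sum_cons]; ring

lemma aux_amgm (l : ℕ) (hl : 2 ≤ l) (t : Multiset ℝ) (ht : t.card = l) :
    |t.prod| ^ ((2 : ℝ) / l) ≤ (t.map (fun x => x ^ 2)).sum / l := by
  have h0 : (0 : ℝ) < l := by positivity
  have e1 : t.prod = ∏ x : t.ToType, (x.1 : ℝ) := by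
    conv_lhs => rw [← Multiset.map_univ_coe t]
    rfl
  have e2 : (t.map (fun x => x ^ 2)).sum = ∑ x : t.ToType, (x.1 : ℝ) ^ 2 := by
    rw [← Multiset.map_univ t (fun x => x ^ 2)]
    rfl
  have key := Real.geom_mean_le_arith_mean_weighted (univ : Finset t.ToType)
    (fun _ => (1 : ℝ) / l) (fun x => (x.1 : ℝ) ^ 2) (fun _ _ => by positivity)
    (by simp [ht, h0.ne']) (fun _ _ => by positivity)
  rw [Real.finsetProd_rpow _ _ (fun _ _ => by positivity), Finset.prod_pow, ← e1,
    ← Finset.mul_sum, ← e2] at key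
  have : |t.prod| ^ ((2 : ℝ) / l) = (t.prod ^ 2) ^ ((1 : ℝ) / l) := by
    rw [← sq_abs, ← Real.rpow_natCast, ← Real.rpow_mul (abs_nonneg _)]
    congr 1; push_cast; ring
  rw [this]
  refine key.trans (le_of_eq ?_)
  ring

theorem sl_bound_s1_s2 (n : ℕ) (hn : 2 ≤ n) (y : Fin n → ℝ) (ℓ : ℕ) (hℓ : 2 ≤ ℓ) (hℓn : ℓ ≤ n) :
    |smean n ℓ y| ^ ((2 : ℝ) / ℓ) ≤ ℓ * smean n 1 y ^ 2 - ((ℓ : ℝ) - 1) * smean n 2 y := by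
  obtain ⟨t, ht, h⟩ := aux_iter ℓ n hℓn ((univ : Finset (Fin n)).val.map y) (by simp)
  have hs : ∀ k ≤ ℓ, smean n k y = t.esymm k / (ℓ.choose k : ℝ) := by
    intro k hk
    rw [h k hk, Finset.esymm_map_val]; rfl
  have hl : t.esymm ℓ = t.prod := by
    rw [← ht]; simp [Multiset.esymm, Multiset.powersetCard_self]
  rw [hs ℓ le_rfl, hs 1 (by omega), hs 2 hℓ, hl, aux_esymm_one]
  have h0 : (2 : ℝ) ≤ ℓ := by exact_mod_cast hℓ
  have h1 : (ℓ : ℝ) - 1 ≠ 0 := by linarith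
  have h2 : (ℓ : ℝ) ≠ 0 := by linarith
  have key := aux_amgm ℓ hℓ t ht
  rw [aux_sq] at key
  rw [Nat.choose_self, Nat.choose_one_right, Nat.cast_choose_two, Nat.cast_one, div_one]
  refine key.trans (le_of_eq ?_)
  field_simp
end
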